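/- Let X be a topological space and G a family of open subsets of X that is a subbasis for its topology, let i : X → (G → Prop) be the map i x g = (x ∈ g), and let q̄ : Opens (G → Prop) → Opens X be the map U ↦ i⁻¹(U). Suppose the map q̄ × id : Opens (G → Prop) × X → Opens X × X is a quotient map (with Scott topologies on both lattices of opens). Then the evaluation map ev : Opens X × X → Prop, (U, x) ↦ (x ∈ U), is continuous; moreover, for every topological space A and every continuous h : A × X → Prop there is a unique continuous map v : A → Opens X (Scott topology) with h (a, x) ↔ x ∈ v a for all a, x, so that Opens X with the Scott topology is the exponential Σ^X. -/

import Mathlib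

open TopologicalSpace

/-- A subset of a complete lattice is Scott-open if it is an upper set and every nonempty
directed set whose supremum lies in it meets it. -/
def ScottOpen {α : Type*} [CompleteLattice α] (U : Set α) : Prop :=
  IsUpperSet U ∧
    ∀ d : Set α, d.Nonempty → DirectedOn (· ≤ ·) d → sSup d ∈ U → (d ∩ U).Nonempty

/-- The Scott topology on a complete lattice. -/
def scottTopology (α : Type*) [CompleteLattice α] : TopologicalSpace α where
  IsOpen := ScottOpen
  isOpen_univ := ⟨isUpperSet_univ, fun d hd _ _ => by simpa using hd⟩
  isOpen_inter := by
    rintro U V ⟨hU, hU'⟩ ⟨hV, hV'⟩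
    refine ⟨hU.inter hV, fun d hd hdir hsup => ?_⟩
    obtain ⟨a, ha, haU⟩ := hU' d hd hdir hsup.1
    obtain ⟨b, hb, hbV⟩ := hV' d hd hdir hsup.2
    obtain ⟨c, hc, hac, hbc⟩ := hdir a ha b hb
    exact ⟨c, hc, hU hac haU, hV hbc hbV⟩
  isOpen_sUnion := by
    intro S hS
    refine ⟨isUpperSet_sUnion fun s hs => (hS s hs).1, fun d hd hdir hsup => ?_⟩
    obtain ⟨U, hU, hmem⟩ := hsup
    obtain ⟨a, ha, haU⟩ := (hS U hU).2 d hd hdir hmem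
    exact ⟨a, ha, U, hU, haU⟩

/-- The canonical map from a space into `Σ^G` for a family `G` of subsets. -/
def iMap {X : Type*} (G : Set (Set X)) : X → (↥G → Prop) := fun x g => x ∈ (g : Set X)

/-- Opens of `Σ^G` are upper sets for the pointwise order. -/
theorem isUpperSet_of_isOpen_pi_prop {ι : Type*} {U : Set (ι → Prop)} (hU : IsOpen U) :
    IsUpperSet U := by
  intro y z hyz hy
  obtain ⟨I, u, hu, hsub⟩ := isOpen_pi_iff.1 hU y hy
  exact hsub fun g hg =>
    Topology.IsUpper.isUpperSet_of_isOpen (hu g hg).1 (hyz g) (hu g hg).2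

/-- The opens containing a given point form a Scott-open set. -/
theorem scottOpen_setOf_mem {Y : Type*} [TopologicalSpace Y] (y : Y) :
    ScottOpen {U : Opens Y | y ∈ U} := by
  refine ⟨fun U V hUV hy => hUV hy, fun d _ _ hy => ?_⟩
  obtain ⟨U, hU, hyU⟩ := Opens.mem_sSup.1 hy
  exact ⟨U, hU, hyU⟩

/-- Evaluation is continuous on `Opens (Σ^G) × Σ^G`: each point of an open set dominates a
compact element of that open set, whose principal filter is open. -/
theorem continuous_eval_opens_pi_prop (ι : Type*) :
    letI : TopologicalSpace (Opens (ι → Prop)) := scottTopology (Opens (ι → Prop))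
    Continuous (fun p : Opens (ι → Prop) × (ι → Prop) => p.2 ∈ p.1) := by
  let _ : TopologicalSpace (Opens (ι → Prop)) := scottTopology (Opens (ι → Prop))
  rw [continuous_Prop, isOpen_prod_iff]
  intro U y hy
  obtain ⟨I, u, hu, hsub⟩ := isOpen_pi_iff.1 U.isOpen y hy
  let c : ι → Prop := fun g => g ∈ I ∧ y g
  refine ⟨{V | c ∈ V}, ⋂ g ∈ I, {z | y g → z g}, scottOpen_setOf_mem c, ?_, ?_, ?_, ?_⟩
  · refine isOpen_biInter_finset fun g _ => ?_
    by_cases hg : y g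
    · simpa [hg] using continuous_Prop.1 (continuous_apply (A := fun _ : ι => Prop) g)
    · simp [hg]
  · refine hsub fun g hg => ?_
    have hcg : c g = y g := propext ⟨fun h => h.2, fun h => ⟨hg, h⟩⟩
    rw [hcg]
    exact (hu g hg).2
  · simp
  · rintro ⟨V, z⟩ ⟨hV, hz⟩
    simp only [Set.mem_iInter, Set.mem_ofPred_eq] at hz
    exact isUpperSet_of_isOpen_pi_prop V.isOpen (fun g hg => hz g hg.1 hg.2) hV

/-- The transpose of an open subset of `A × X` is continuous into the Scott topology. -/
theorem continuous_scott_of_isOpen {A X : Type*} [TopologicalSpace A] [TopologicalSpace X]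
    (v : A → Opens X) (hv : IsOpen {p : A × X | p.2 ∈ v p.1}) :
    letI : TopologicalSpace (Opens X) := scottTopology (Opens X)
    Continuous v := by
  let _ : TopologicalSpace (Opens X) := scottTopology (Opens X)
  refine continuous_def.2 fun W hW => isOpen_iff_mem_nhds.2 fun a ha => ?_
  obtain ⟨hup, hdir⟩ : ScottOpen W := hW
  let d : Set (Opens X) := {O | ∃ N : Set A, IsOpen N ∧ a ∈ N ∧ ∀ b ∈ N, O ≤ v b}
  have hd : DirectedOn (· ≤ ·) d := by
    rintro O ⟨N, hN, haN, hO⟩ P ⟨M, hM, haM, hP⟩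
    exact ⟨O ⊔ P, ⟨N ∩ M, hN.inter hM, ⟨haN, haM⟩,
      fun b hb => sup_le (hO b hb.1) (hP b hb.2)⟩, le_sup_left, le_sup_right⟩
  have hsup : v a ≤ sSup d := by
    intro x hx
    obtain ⟨N, O, hN, hO, haN, hxO, hNO⟩ := isOpen_prod_iff.1 hv a x hx
    exact Opens.mem_sSup.2
      ⟨⟨O, hO⟩, ⟨N, hN, haN, fun b hb y hy => hNO (Set.mk_mem_prod hb hy)⟩, hxO⟩
  obtain ⟨O, ⟨N, hN, haN, hO⟩, hOW⟩ :=
    hdir d ⟨⊥, Set.univ, isOpen_univ, Set.mem_univ a, fun _ _ => bot_le⟩ hd (hup hsup ha)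
  exact Filter.mem_of_superset (hN.mem_nhds haN) fun b hb => hup (hO b hb) hOW

/-- If `q̄ × id : Opens (Σ^G) × X → Opens X × X` is a quotient map (Scott
topologies on the lattices of opens), then the evaluation map of `Opens X` is continuous and
`Opens X` with the Scott topology is the exponential `Σ^X`. -/
theorem opens_scott_exponential_of_quotient {X : Type v} [tX : TopologicalSpace X]
    (G : Set (Set X)) (hG : tX = TopologicalSpace.generateFrom G)
    (hi : Continuous (iMap G))
    (hq : letI : TopologicalSpace (Opens X) := scottTopology (Opens X)
      letI : TopologicalSpace (Opens (↥G → Prop)) := scottTopology (Opens (↥G → Prop))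
      Topology.IsQuotientMap (fun p : Opens (↥G → Prop) × X =>
        ((Opens.comap ⟨iMap G, hi⟩ p.1, p.2) : Opens X × X))) :
    letI : TopologicalSpace (Opens X) := scottTopology (Opens X)
    Continuous (fun p : Opens X × X => p.2 ∈ p.1) ∧
      ∀ (A : Type u) [TopologicalSpace A] (h : A × X → Prop), Continuous h →
        ∃! v : A → Opens X, Continuous v ∧ ∀ (a : A) (x : X), h (a, x) ↔ x ∈ v a := by
  let _ : TopologicalSpace (Opens X) := scottTopology (Opens X)
  let _ : TopologicalSpace (Opens (↥G → Prop)) := scottTopology (Opens (↥G → Prop))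
  refine ⟨?_, fun A _ h hh => ?_⟩
  · exact hq.continuous_iff.2 ((continuous_eval_opens_pi_prop ↥G).comp
      (continuous_fst.prodMk (hi.comp continuous_snd)))
  · have hopen : IsOpen {p : A × X | h p} := continuous_Prop.1 hh
    refine ⟨fun a => ⟨{x | h (a, x)}, hopen.preimage (Continuous.prodMk_right a)⟩,
      ⟨continuous_scott_of_isOpen _ hopen, fun _ _ => Iff.rfl⟩, fun w hw => ?_⟩
    funext a
    ext x
    exact (hw.2 a x).symm
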